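/- arXiv:1910.06888 — 2 statements merged into one kernel-verified Lean document; each statement's English description precedes it below -/
import Mathlib

section
/- The hyperelliptic curve z² = (4x² + 1)(x² + 1)(x² + 4) has only finitely many rational points; that is, the set {(x, z) ∈ ℚ × ℚ : z² = (4x² + 1)(x² + 1)(x² + 4)} is finite. -/
/-!
Clearing denominators in `x = a / b` turns a rational point into coprime integers `a`, `b` for which
`(4a² + b²)(a² + b²)(a² + 4b²)` is a square. A sum of two coprime squares is prime to `3`, so
`a² + b²` is coprime to the other factors and is itself a square; then a congruence modulo `5` shows
that the other two are coprime, so they are squares as well.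

If `a` is odd then `a² + b²` and `a² + 4b²` are both squares, and comparing the parametrizations of
the Pythagorean triples with legs `(a, b)` and `(a, 2b)` produces a smaller pair of the same kind;
by infinite descent `b = 0`. If `b` is odd, exchanging `a` and `b` gives `a = 0`. Hence `x = 0` at
every rational point.
-/

theorem exists_eq_mul_and_eq_mul_of_mul_eq_mul {M : Type*} [CommMonoidWithZero M]
    [IsCancelMulZero M] [DecompositionMonoid M] {a b c d : M} (ha : a ≠ 0) (h : a * b = c * d) :
    ∃ x y z w, a = x * y ∧ b = z * w ∧ c = x * z ∧ d = y * w := by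
  obtain ⟨x, y, ⟨z, rfl⟩, ⟨w, rfl⟩, rfl⟩ := exists_dvd_and_dvd_of_dvd_mul (Dvd.intro b h)
  exact ⟨x, y, z, w, rfl, mul_left_cancel₀ ha (by rw [h, mul_mul_mul_comm]), rfl, rfl⟩

section CoprimeIntegers

variable {a b : ℤ}

theorem eq_of_mul_eq_mul_of_isCoprime {c d : ℤ} (ha : 0 ≤ a) (hc : 0 ≤ c) (hab : IsCoprime a b)
    (hcd : IsCoprime c d) (h : a * d = b * c) : a = c :=
  Int.dvd_antisymm ha hc (hab.dvd_of_dvd_mul_left (Dvd.intro d h))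
    (hcd.dvd_of_dvd_mul_right (Dvd.intro_left b h.symm))

theorem isSquare_left_of_isSquare_mul (ha : 0 ≤ a) (hab : IsCoprime a b)
    (h : IsSquare (a * b)) : IsSquare a := by
  obtain ⟨c, hc⟩ := h
  obtain ⟨d, rfl | hd⟩ := Int.sq_of_isCoprime hab (hc.trans (sq c).symm)
  · exact IsSquare.sq d
  · have : a = 0 := le_antisymm (hd ▸ neg_nonpos.2 (sq_nonneg d)) ha
    exact this ▸ IsSquare.zero

theorem not_dvd_sq_add_sq_of_isCoprime {p : ℕ} (hp : p.Prime) (hp4 : p % 4 = 3)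
    (hab : IsCoprime a b) : ¬ (p : ℤ) ∣ a ^ 2 + b ^ 2 := by
  intro hdvd
  have := Fact.mk hp
  have hsq : IsSquare (-1 : ZMod p) := ZMod.isSquare_neg_one_of_dvd (Int.natCast_dvd.1 hdvd)
    (ZMod.isSquare_neg_one_of_eq_sq_add_sq_of_isCoprime rfl hab)
  exact ZMod.exists_sq_eq_neg_one_iff.1 hsq hp4

theorem isCoprime_three_sq_add_sq (hab : IsCoprime a b) : IsCoprime 3 (a ^ 2 + b ^ 2) :=
  Int.prime_three.coprime_iff_not_dvd.2 (not_dvd_sq_add_sq_of_isCoprime Nat.prime_three rfl hab)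

theorem isCoprime_sq_add_sq_sq_add_four_mul_sq (hab : IsCoprime a b) :
    IsCoprime (a ^ 2 + b ^ 2) (a ^ 2 + 4 * b ^ 2) := by
  have hb : IsCoprime (a ^ 2 + b ^ 2) (b ^ 2) := by
    simpa using (hab.pow (m := 2) (n := 2)).add_mul_left_left 1
  have hsum : a ^ 2 + 4 * b ^ 2 = 3 * b ^ 2 + (a ^ 2 + b ^ 2) * 1 := by ring
  rw [hsum, IsCoprime.add_mul_left_right_iff]
  exact (isCoprime_three_sq_add_sq hab).symm.mul_right hb

theorem isCoprime_five_sq_add_four_mul_sq (hab : IsCoprime a b) (h : IsSquare (a ^ 2 + b ^ 2)) :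
    IsCoprime 5 (a ^ 2 + 4 * b ^ 2) := by
  have prime_five : Prime (5 : ℤ) := Nat.prime_iff_prime_int.1 Nat.prime_five
  refine prime_five.coprime_iff_not_dvd.2 fun hdvd ↦ ?_
  obtain ⟨r, hr⟩ := h
  -- Modulo `5` the assumptions read `a² = b²` and `2a² = r²`, but `2` is not a square.
  have key : ∀ x y z : ZMod 5, x ^ 2 + 4 * y ^ 2 = 0 → x ^ 2 + y ^ 2 = z * z → x = 0 ∧ y = 0 := by
    decide
  have hdvd' : (a : ZMod 5) ^ 2 + 4 * (b : ZMod 5) ^ 2 = 0 := by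
    exact_mod_cast (ZMod.intCast_zmod_eq_zero_iff_dvd _ 5).2 hdvd
  obtain ⟨ha, hb⟩ := key a b r hdvd' (by exact_mod_cast congrArg (Int.cast : ℤ → ZMod 5) hr)
  rw [ZMod.intCast_zmod_eq_zero_iff_dvd] at ha hb
  exact prime_five.not_isUnit (hab.isUnit_of_dvd' ha hb)

theorem isCoprime_four_mul_sq_add_sq_sq_add_four_mul_sq (hab : IsCoprime a b)
    (h : IsSquare (a ^ 2 + b ^ 2)) :
    IsCoprime (4 * a ^ 2 + b ^ 2) (a ^ 2 + 4 * b ^ 2) := by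
  have h3 : IsCoprime 3 (a ^ 2 + 4 * b ^ 2) := by
    have hsum : a ^ 2 + 4 * b ^ 2 = (a ^ 2 + b ^ 2) + 3 * b ^ 2 := by ring
    rw [hsum, IsCoprime.add_mul_left_right_iff]
    exact isCoprime_three_sq_add_sq hab
  have h5 : IsCoprime 5 (a ^ 2 + 4 * b ^ 2) := isCoprime_five_sq_add_four_mul_sq hab h
  have hb : IsCoprime (b ^ 2) (a ^ 2 + 4 * b ^ 2) := by
    simpa [mul_comm] using (hab.symm.pow (m := 2) (n := 2)).add_mul_left_right 4
  have hcomb : 4 * a ^ 2 + b ^ 2 = -(3 * 5 * b ^ 2) + (a ^ 2 + 4 * b ^ 2) * 4 := by ring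
  rw [hcomb, IsCoprime.add_mul_left_left_iff]
  exact ((h3.mul_left h5).mul_left hb).neg_left

theorem isSquare_factors_of_isSquare_mul (hab : IsCoprime a b)
    (h : IsSquare ((4 * a ^ 2 + b ^ 2) * (a ^ 2 + b ^ 2) * (a ^ 2 + 4 * b ^ 2))) :
    IsSquare (4 * a ^ 2 + b ^ 2) ∧ IsSquare (a ^ 2 + b ^ 2) ∧ IsSquare (a ^ 2 + 4 * b ^ 2) := by
  have hmid : IsCoprime (a ^ 2 + b ^ 2) ((4 * a ^ 2 + b ^ 2) * (a ^ 2 + 4 * b ^ 2)) := by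
    refine IsCoprime.mul_right ?_ (isCoprime_sq_add_sq_sq_add_four_mul_sq hab)
    simpa only [add_comm] using isCoprime_sq_add_sq_sq_add_four_mul_sq hab.symm
  have hmid_sq : IsSquare (a ^ 2 + b ^ 2) :=
    isSquare_left_of_isSquare_mul (by positivity) hmid (by convert h using 1; ring)
  have houter : IsCoprime (4 * a ^ 2 + b ^ 2) (a ^ 2 + 4 * b ^ 2) :=
    isCoprime_four_mul_sq_add_sq_sq_add_four_mul_sq hab hmid_sq
  have houter_sq : IsSquare ((4 * a ^ 2 + b ^ 2) * (a ^ 2 + 4 * b ^ 2)) :=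
    isSquare_left_of_isSquare_mul (by positivity) hmid.symm (by convert h using 1; ring)
  exact ⟨isSquare_left_of_isSquare_mul (by positivity) houter houter_sq, hmid_sq,
    isSquare_left_of_isSquare_mul (by positivity) houter.symm (by rwa [mul_comm])⟩

theorem exists_eq_sq_sub_sq_and_eq_two_mul_mul (hab : IsCoprime a b) (ha : Odd a)
    (h : IsSquare (a ^ 2 + b ^ 2)) :
    ∃ m n : ℤ, IsCoprime m n ∧ a = m ^ 2 - n ^ 2 ∧ b = 2 * m * n := by
  obtain ⟨c, hc⟩ := h
  have htriple : PythagoreanTriple a b c := by rwa [PythagoreanTriple, ← sq, ← sq]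
  obtain ⟨m, n, ⟨hm, hn⟩ | ⟨hm, -⟩, hmn, -⟩ :=
    htriple.isPrimitiveClassified_of_coprime (Int.isCoprime_iff_gcd_eq_one.1 hab)
  · exact ⟨m, n, Int.isCoprime_iff_gcd_eq_one.2 hmn, hm, hn⟩
  · exact absurd (hm ▸ ha) (by simp [parity_simps])

end CoprimeIntegers

/-- A primitive solution of Euler's problem of making `a² + b²` and `a² + 4b²` squares
simultaneously. Requiring `a` to be odd excludes the solutions `(0, ±1)`. -/
structure IsConcordantPair (a b : ℤ) : Prop where
  isCoprime : IsCoprime a b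
  odd : Odd a
  isSquare_add : IsSquare (a ^ 2 + b ^ 2)
  isSquare_add_four_mul : IsSquare (a ^ 2 + 4 * b ^ 2)

namespace IsConcordantPair

variable {a b x y z w : ℤ}

theorem of_mul_eq_mul (hxw : IsCoprime x w) (hyz : IsCoprime y z) (hx : Odd x)
    (h : (x ^ 2 + w ^ 2) * z ^ 2 = (x ^ 2 + 4 * w ^ 2) * y ^ 2) : IsConcordantPair x w := by
  -- `(x² + w²) / (x² + 4w²)` and `y² / z²` are equal fractions in lowest terms.
  have hcop := isCoprime_sq_add_sq_sq_add_four_mul_sq hxw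
  have hy : x ^ 2 + w ^ 2 = y ^ 2 :=
    eq_of_mul_eq_mul_of_isCoprime (by positivity) (by positivity) hcop hyz.pow h
  have hz : x ^ 2 + 4 * w ^ 2 = z ^ 2 :=
    eq_of_mul_eq_mul_of_isCoprime (by positivity) (by positivity) hcop.symm hyz.symm.pow h.symm
  exact ⟨hxw, hx, hy ▸ IsSquare.sq y, hz ▸ IsSquare.sq z⟩

theorem exists_of_sq_sub_sq_eq {m n p q : ℤ} (hmn : IsCoprime m n) (hpq : IsCoprime p q)
    (hm : m ≠ 0) (hodd : Odd (m ^ 2 - n ^ 2)) (hsub : m ^ 2 - n ^ 2 = p ^ 2 - q ^ 2)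
    (hmul : p * q = 2 * (m * n)) : ∃ c d, IsConcordantPair c d ∧ d ∣ m * n := by
  rcases Int.prime_two.dvd_or_dvd (Dvd.intro _ hmul.symm) with ⟨r, rfl⟩ | ⟨r, rfl⟩
  · obtain ⟨x, y, z, w, rfl, rfl, rfl, rfl⟩ :=
      exists_eq_mul_and_eq_mul_of_mul_eq_mul (b := n) (c := r) (d := q) hm (by linarith)
    have hwx : IsCoprime w x := hpq.symm.of_mul_left_right.of_mul_right_right.of_mul_right_left
    have hzy : IsCoprime z y := hmn.symm.of_mul_left_left.of_mul_right_right
    have hqodd : Odd (y * w) := by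
      simpa [hsub, Int.odd_sub', Int.even_pow, Int.odd_pow] using hodd
    have hw : Odd w := Int.Odd.of_mul_right hqodd
    exact ⟨w, x, of_mul_eq_mul hwx hzy hw (by linear_combination hsub), y * (z * w), by ring⟩
  · obtain ⟨x, y, z, w, rfl, rfl, rfl, rfl⟩ :=
      exists_eq_mul_and_eq_mul_of_mul_eq_mul (b := n) (c := p) (d := r) hm (by linarith)
    have hxw : IsCoprime x w := hpq.of_mul_left_left.of_mul_right_right.of_mul_right_right
    have hyz : IsCoprime y z := hmn.of_mul_left_right.of_mul_right_left
    have hpodd : Odd (x * z) := by simpa [hsub, parity_simps] using hodd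
    have hx : Odd x := Int.Odd.of_mul_left hpodd
    exact ⟨x, w, of_mul_eq_mul hxw hyz hx (by linear_combination -hsub), x * y * z, by ring⟩

theorem exists_two_mul_dvd (h : IsConcordantPair a b) (hb : b ≠ 0) :
    ∃ c d, IsConcordantPair c d ∧ 2 * d ∣ b := by
  obtain ⟨m, n, hmn, rfl, rfl⟩ :=
    exists_eq_sq_sub_sq_and_eq_two_mul_mul h.isCoprime h.odd h.isSquare_add
  have hcop : IsCoprime (m ^ 2 - n ^ 2) (2 * (2 * m * n)) :=
    (Int.isCoprime_two_right.2 h.odd).mul_right h.isCoprime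
  obtain ⟨p, q, hpq, hsub, hmul⟩ := exists_eq_sq_sub_sq_and_eq_two_mul_mul hcop h.odd
    (by convert h.isSquare_add_four_mul using 1; ring)
  have hm : m ≠ 0 := right_ne_zero_of_mul (left_ne_zero_of_mul hb)
  obtain ⟨c, d, hcd, hd⟩ := exists_of_sq_sub_sq_eq hmn hpq hm h.odd hsub (by linarith)
  exact ⟨c, d, hcd, mul_assoc 2 m n ▸ mul_dvd_mul_left 2 hd⟩

theorem right_eq_zero (h : IsConcordantPair a b) : b = 0 := by
  induction hn : b.natAbs using Nat.strong_induction_on generalizing a b with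
  | _ n ih =>
    subst hn
    by_contra hb
    obtain ⟨c, d, hcd, hdvd⟩ := h.exists_two_mul_dvd hb
    have hle : (2 * d).natAbs ≤ b.natAbs := Int.natAbs_le_of_dvd_ne_zero hdvd hb
    have hd : d = 0 := ih d.natAbs (by omega) hcd rfl
    exact hb (zero_dvd_iff.1 (by simpa [hd] using hdvd))

end IsConcordantPair

theorem eq_zero_or_eq_zero_of_isSquare {a b : ℤ} (hab : IsCoprime a b)
    (h : IsSquare ((4 * a ^ 2 + b ^ 2) * (a ^ 2 + b ^ 2) * (a ^ 2 + 4 * b ^ 2))) :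
    a = 0 ∨ b = 0 := by
  obtain ⟨hsq₁, hsq₂, hsq₃⟩ := isSquare_factors_of_isSquare_mul hab h
  rcases Int.even_or_odd a with ha | ha
  · have hb : Odd b := Int.isCoprime_two_left.1 (hab.of_isCoprime_of_dvd_left ha.two_dvd)
    exact .inl (IsConcordantPair.right_eq_zero
      ⟨hab.symm, hb, by rwa [add_comm], by rwa [add_comm]⟩)
  · exact .inr (IsConcordantPair.right_eq_zero ⟨hab, ha, hsq₂, hsq₃⟩)

theorem eq_zero_of_isSquare {x : ℚ} (h : IsSquare ((4 * x ^ 2 + 1) * (x ^ 2 + 1) * (x ^ 2 + 4))) :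
    x = 0 := by
  obtain ⟨z, hz⟩ := h
  have hx : x * x.den = x.num := Rat.mul_den_eq_num x
  have hsq : IsSquare ((4 * x.num ^ 2 + (x.den : ℤ) ^ 2) * (x.num ^ 2 + (x.den : ℤ) ^ 2) *
      (x.num ^ 2 + 4 * (x.den : ℤ) ^ 2)) := by
    rw [← Rat.isSquare_intCast_iff]
    refine ⟨z * (x.den : ℚ) ^ 3, ?_⟩
    push_cast
    rw [← hx]
    linear_combination (x.den : ℚ) ^ 6 * hz
  have hnum := eq_zero_or_eq_zero_of_isSquare (Rat.isCoprime_num_den x) hsq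
  exact Rat.num_eq_zero.1 (hnum.resolve_right (Int.natCast_ne_zero.2 x.den_nz))

theorem rational_points_on_hyperelliptic_curve_eq :
    {p : ℚ × ℚ | p.2 ^ 2 = (4 * p.1 ^ 2 + 1) * (p.1 ^ 2 + 1) * (p.1 ^ 2 + 4)} =
      {(0, 2), (0, -2)} := by
  ext ⟨x, z⟩
  simp only [Set.mem_ofPred_eq, Set.mem_insert_iff, Set.mem_singleton_iff, Prod.mk.injEq]
  constructor
  · intro h
    obtain rfl : x = 0 := eq_zero_of_isSquare (h ▸ IsSquare.sq z)
    have hz : z ^ 2 = 2 ^ 2 := by linarith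
    simpa using sq_eq_sq_iff_eq_or_eq_neg.1 hz
  · rintro (⟨rfl, rfl⟩ | ⟨rfl, rfl⟩) <;> norm_num

/-- The hyperelliptic genus-two curve `z² = (4x² + 1)(x² + 1)(x² + 4)` has only
finitely many rational points. -/
theorem finitely_many_rational_points_on_hyperelliptic_curve :
    {p : ℚ × ℚ | p.2 ^ 2 = (4 * p.1 ^ 2 + 1) * (p.1 ^ 2 + 1) * (p.1 ^ 2 + 4)}.Finite := by
  rw [rational_points_on_hyperelliptic_curve_eq]
  exact Set.toFinite _
end

section
/- Let λ be a rational number with λ ≠ 0 and λ² < 1. The affine curve X₁₂ ⊂ ℂ⁴ defined by the three equations 1 − x² − y² + 2λxy = 0, 4t₁² − 2x² − 2y² + 1 = 0 and 4t₂² − 2x² − 2 + y² = 0 is irreducible; equivalently, the zero locus of the ideal generated by these three polynomials in the prime spectrum of ℂ[x, y, t₁, t₂] is an irreducible closed set. -/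
open MvPolynomial

/-!
Over an algebraically closed field the quadratic form `x² + y² - 2mxy` splits into two linear forms,
so the conic is a torus `𝔾ₘ` and its coordinate ring is `K[T;T⁻¹]`. The curve is then obtained by
adjoining square roots of `f = 2x² + 2y² - 1` and `g = 2x² + 2 - y²` to this integrally closed
domain, and the result is a domain as soon as none of `f`, `g`, `fg` is a square. Since the two
double covers have different branch points, each of the three has a simple zero on the torus. The
case of an arbitrary field follows because `Spec K̄[x, y, t₁, t₂] → Spec K[x, y, t₁, t₂]` is
surjective.
-/

open scoped LaurentPolynomial Polynomial

section Biquadratic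

variable {F L : Type*} [Field F] [CommRing L] [Nontrivial L] [Algebra F L] {α β : F} {s t : L}

theorem sq_sub_mul_sq_ne_zero (hα : ¬ IsSquare α) {a b : F} (hb : b ≠ 0) :
    a ^ 2 - α * b ^ 2 ≠ 0 := fun h ↦
  hα ⟨a / b, by field_simp; linear_combination -h⟩

theorem eq_zero_of_add_mul_sqrt_eq_zero (hs : s ^ 2 = algebraMap F L α) (hα : ¬ IsSquare α)
    {a b : F} (h : algebraMap F L a + algebraMap F L b * s = 0) : a = 0 ∧ b = 0 := by
  have norm_eq_zero : a ^ 2 - α * b ^ 2 = 0 := (algebraMap F L).injective <| by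
    simp only [map_sub, map_mul, map_pow, map_zero, ← hs]
    linear_combination (algebraMap F L a - algebraMap F L b * s) * h
  have hb : b = 0 := not_not.mp fun hb ↦ sq_sub_mul_sq_ne_zero hα hb norm_eq_zero
  subst hb
  exact ⟨by simpa using h, rfl⟩

theorem eq_zero_of_mul_sqrt_eq_add_mul_sqrt (h2 : (2 : F) ≠ 0) (hs : s ^ 2 = algebraMap F L α)
    (ht : t ^ 2 = algebraMap F L β) (hα : ¬ IsSquare α) (hβ : ¬ IsSquare β)
    (hαβ : ¬ IsSquare (α * β)) {n e f : F}
    (h : algebraMap F L n * t = algebraMap F L e + algebraMap F L f * s) : n = 0 := by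
  by_contra hn
  obtain ⟨hef, h2ef⟩ := eq_zero_of_add_mul_sqrt_eq_zero (a := e ^ 2 + f ^ 2 * α - β * n ^ 2)
    (b := 2 * e * f) hs hα (by
      simp only [map_sub, map_add, map_mul, map_pow, map_ofNat, ← hs, ← ht]
      linear_combination -(algebraMap F L n * t + algebraMap F L e + algebraMap F L f * s) * h)
  obtain rfl | rfl : e = 0 ∨ f = 0 := by simpa [h2] using h2ef
  · exact sq_sub_mul_sq_ne_zero hαβ (a := f * α) hn (by linear_combination α * hef)
  · exact sq_sub_mul_sq_ne_zero hβ (a := e) hn (by linear_combination hef)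

theorem linearIndependent_biquadratic (h2 : (2 : F) ≠ 0) (hs : s ^ 2 = algebraMap F L α)
    (ht : t ^ 2 = algebraMap F L β) (hα : ¬ IsSquare α) (hβ : ¬ IsSquare β)
    (hαβ : ¬ IsSquare (α * β)) : LinearIndependent F ![1, s, t, s * t] := by
  rw [Fintype.linearIndependent_iff]
  intro k hk
  obtain ⟨a, b, c, d, rfl⟩ : ∃ a b c d, k = ![a, b, c, d] :=
    ⟨k 0, k 1, k 2, k 3, List.ofFn_inj.mp rfl⟩
  replace hk : algebraMap F L a + algebraMap F L b * s
      + (algebraMap F L c + algebraMap F L d * s) * t = 0 := by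
    simp only [Fin.sum_univ_four, Algebra.smul_def, Matrix.cons_val] at hk
    linear_combination hk
  -- Multiplying by the conjugate `c - d s` of the coefficient of `t` moves its norm to `F`.
  have norm_eq_zero : c ^ 2 - α * d ^ 2 = 0 :=
    eq_zero_of_mul_sqrt_eq_add_mul_sqrt (e := b * d * α - a * c) (f := a * d - b * c)
      h2 hs ht hα hβ hαβ <| by
        simp only [map_sub, map_mul, map_pow, ← hs]
        linear_combination (algebraMap F L c - algebraMap F L d * s) * hk
  obtain rfl : d = 0 := not_not.mp fun hd ↦ sq_sub_mul_sq_ne_zero hα hd norm_eq_zero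
  obtain rfl : c = 0 := by simpa using norm_eq_zero
  obtain ⟨rfl, rfl⟩ := eq_zero_of_add_mul_sqrt_eq_zero hs hα (by simpa using hk)
  simp [Fin.forall_fin_succ]

end Biquadratic

section BiquadraticIdeal

variable {R : Type*} [CommRing R]

/-- The ideal of relations of the biquadratic extension `R[√f, √g]`, generated by `X₀² - f` and
`X₁² - g`. -/
noncomputable def biquadraticIdeal (f g : R) : Ideal (MvPolynomial (Fin 2) R) :=
  Ideal.span {X 0 ^ 2 - C f, X 1 ^ 2 - C g}

theorem X_zero_sq_sub_C_mem_biquadraticIdeal (f g : R) : X 0 ^ 2 - C f ∈ biquadraticIdeal f g :=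
  Ideal.subset_span (Set.mem_insert _ _)

theorem X_one_sq_sub_C_mem_biquadraticIdeal (f g : R) : X 1 ^ 2 - C g ∈ biquadraticIdeal f g :=
  Ideal.subset_span (Set.mem_insert_of_mem _ (Set.mem_singleton _))

theorem biquadraticIdeal_le_iff {f g : R} {I : Ideal (MvPolynomial (Fin 2) R)} :
    biquadraticIdeal f g ≤ I ↔ X 0 ^ 2 - C f ∈ I ∧ X 1 ^ 2 - C g ∈ I := by
  rw [biquadraticIdeal, Ideal.span_le, Set.insert_subset_iff, Set.singleton_subset_iff,
    SetLike.mem_coe, SetLike.mem_coe]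

theorem exists_sub_mem_biquadraticIdeal (f g : R) (p : MvPolynomial (Fin 2) R) :
    ∃ a b c d : R, p - (C a + C b * X 0 + C c * X 1 + C d * (X 0 * X 1)) ∈
      biquadraticIdeal f g := by
  induction p using MvPolynomial.induction_on with
  | C a => exact ⟨a, 0, 0, 0, by simp⟩
  | add p q hp hq =>
    obtain ⟨a, b, c, d, hp⟩ := hp
    obtain ⟨a', b', c', d', hq⟩ := hq
    refine ⟨a + a', b + b', c + c', d + d', ?_⟩
    convert! add_mem hp hq using 1
    simp only [map_add]
    ring
  | mul_X p i hp =>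
    obtain ⟨a, b, c, d, hp⟩ := hp
    fin_cases i
    · refine ⟨b * f, a, d * f, c, ?_⟩
      convert! add_mem (Ideal.mul_mem_left _ (X 0) hp) (Ideal.mul_mem_left _ (C b + C d * X 1)
        (X_zero_sq_sub_C_mem_biquadraticIdeal f g)) using 1
      simp only [map_mul, Fin.zero_eta]
      ring
    · refine ⟨c * g, d * g, a, b, ?_⟩
      convert! add_mem (Ideal.mul_mem_left _ (X 1) hp) (Ideal.mul_mem_left _ (C c + C d * X 0)
        (X_one_sq_sub_C_mem_biquadraticIdeal f g)) using 1
      simp only [map_mul, Fin.mk_one]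
      ring

theorem ker_aeval_eq_biquadraticIdeal {L : Type*} [CommRing L] [Algebra R L] {f g : R} {s t : L}
    (hs : s ^ 2 = algebraMap R L f) (ht : t ^ 2 = algebraMap R L g)
    (indep : LinearIndependent R ![1, s, t, s * t]) :
    RingHom.ker (aeval (R := R) ![s, t]) = biquadraticIdeal f g := by
  have le_ker : biquadraticIdeal f g ≤ RingHom.ker (aeval (R := R) ![s, t]) := by
    simp [biquadraticIdeal_le_iff, hs, ht]
  refine le_antisymm (fun p hp ↦ ?_) le_ker
  obtain ⟨a, b, c, d, h⟩ := exists_sub_mem_biquadraticIdeal f g p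
  have relation : algebraMap R L a + algebraMap R L b * s + algebraMap R L c * t
      + algebraMap R L d * (s * t) = 0 := by
    simpa [RingHom.mem_ker.mp hp, -neg_add_rev] using le_ker h
  have coeff_eq_zero := Fintype.linearIndependent_iff.mp indep ![a, b, c, d] <| by
    simpa [Fin.sum_univ_four, Algebra.smul_def] using relation
  obtain ⟨rfl, rfl, rfl, rfl⟩ : a = 0 ∧ b = 0 ∧ c = 0 ∧ d = 0 := by
    simpa [Fin.forall_fin_succ] using coeff_eq_zero
  simpa using h

theorem isSquare_of_isSquare_algebraMap {F : Type*} [Field F] [Algebra R F] [IsFractionRing R F]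
    [IsIntegrallyClosed R] {r : R} (h : IsSquare (algebraMap R F r)) : IsSquare r := by
  obtain ⟨z, hz⟩ := h
  obtain ⟨y, rfl⟩ := IsIntegrallyClosed.exists_algebraMap_eq_of_isIntegral_pow (R := R) (x := z)
    two_pos (by rw [sq, ← hz]; exact isIntegral_algebraMap)
  exact ⟨y, IsFractionRing.injective R F (by rw [hz, map_mul])⟩

theorem isPrime_biquadraticIdeal [IsDomain R] [IsIntegrallyClosed R] (h2 : (2 : R) ≠ 0) {f g : R}
    (hf : ¬ IsSquare f) (hg : ¬ IsSquare g) (hfg : ¬ IsSquare (f * g)) :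
    (biquadraticIdeal f g).IsPrime := by
  let F := FractionRing R
  let L := AlgebraicClosure F
  have h2F : (2 : F) ≠ 0 := by
    simpa only [map_ofNat, map_zero] using (IsFractionRing.injective R F).ne h2
  obtain ⟨s, hs⟩ := IsAlgClosed.exists_pow_nat_eq (algebraMap F L (algebraMap R F f)) two_pos
  obtain ⟨t, ht⟩ := IsAlgClosed.exists_pow_nat_eq (algebraMap F L (algebraMap R F g)) two_pos
  have indep : LinearIndependent R ![1, s, t, s * t] :=
    (linearIndependent_biquadratic h2F hs ht (mt isSquare_of_isSquare_algebraMap hf)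
      (mt isSquare_of_isSquare_algebraMap hg)
      (by rw [← map_mul]; exact mt isSquare_of_isSquare_algebraMap hfg)).restrict_scalars' R
  rw [← IsScalarTower.algebraMap_apply] at hs ht
  rw [← ker_aeval_eq_biquadraticIdeal hs ht indep]
  exact RingHom.ker_isPrime _

end BiquadraticIdeal

section Laurent

open Polynomial (toLaurent expand)

theorem eval_derivative_mul_of_eval_eq_zero {R : Type*} [CommSemiring R] {p : R[X]} {r : R}
    (hp : p.eval r = 0) (q : R[X]) :
    (p * q).derivative.eval r = p.derivative.eval r * q.eval r := by
  simp [Polynomial.derivative_mul, hp]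

instance isIntegrallyClosed_laurentPolynomial {R : Type*} [CommRing R] [IsDomain R]
    [IsIntegrallyClosed R] : IsIntegrallyClosed R[T;T⁻¹] :=
  isIntegrallyClosed_of_isLocalization (R := R[X]) R[T;T⁻¹] (Submonoid.powers Polynomial.X)
    (powers_le_nonZeroDivisors_of_noZeroDivisors Polynomial.X_ne_zero)

theorem not_isSquare_toLaurent {R : Type*} [CommRing R] [IsDomain R] {p : R[X]} {r : R}
    (hr : r ≠ 0) (hp : p.eval r = 0) (hp' : p.derivative.eval r ≠ 0) :
    ¬ IsSquare (toLaurent p) := by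
  rintro ⟨h, hh⟩
  obtain ⟨n, q, hq⟩ := LaurentPolynomial.exists_T_pow h
  have sq_eq : q ^ 2 = p * Polynomial.X ^ (2 * n) := Polynomial.toLaurent_injective <| by
    rw [map_pow, hq, map_mul, hh, Polynomial.toLaurent_X_pow, mul_pow, LaurentPolynomial.T_pow, sq]
    push_cast
    rfl
  have hqr : q.eval r = 0 := by simpa [hp] using congrArg (Polynomial.eval r) sq_eq
  have derivative_eq := congrArg (fun f ↦ f.derivative.eval r) sq_eq
  simp [Polynomial.derivative_pow, hqr, hp, hp', hr] at derivative_eq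

theorem not_isSquare_toLaurent_expand_two {K : Type*} [Field K] [IsAlgClosed K]
    (h2 : (2 : K) ≠ 0) {p : K[X]} {r : K} (hr : r ≠ 0) (hp : p.eval r = 0)
    (hp' : p.derivative.eval r ≠ 0) : ¬ IsSquare (toLaurent (expand K 2 p)) := by
  obtain ⟨z, rfl⟩ := IsAlgClosed.exists_pow_nat_eq r two_pos
  have hz : z ≠ 0 := ne_zero_pow two_ne_zero hr
  apply not_isSquare_toLaurent hz
  · rwa [Polynomial.expand_eval]
  · simp [Polynomial.derivative_expand, Polynomial.expand_eval, hp', h2, hz]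

end Laurent

section Conic

open LaurentPolynomial (T)

variable {K B : Type*} [Field K] [CommRing B] [Algebra K B] {m w : K}

theorem exists_sq_add_one_eq_two_mul [IsAlgClosed K] (h2 : (2 : K) ≠ 0) (hm0 : m ≠ 0)
    (hm1 : m ^ 2 ≠ 1) : ∃ w : K, w ^ 2 + 1 = 2 * m * w ∧ w ^ 2 ≠ 1 ∧ w ^ 2 ≠ -1 := by
  obtain ⟨r, hr⟩ := IsAlgClosed.exists_pow_nat_eq (m ^ 2 - 1) two_pos
  have hw : (m + r) ^ 2 + 1 = 2 * m * (m + r) := by linear_combination hr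
  refine ⟨m + r, hw, fun h ↦ hm1 ?_, fun h ↦ ?_⟩
  · have mul_eq_one : m * (m + r) = 1 := mul_left_cancel₀ h2 (by linear_combination h - hw)
    linear_combination (m * (m + r) + 1) * mul_eq_one - m ^ 2 * h
  · obtain h0 : m + r = 0 := by simpa [h, h2, hm0] using hw
    simp [h0] at h

theorem ne_zero_of_sq_add_one_eq_two_mul (hw : w ^ 2 + 1 = 2 * m * w) : w ≠ 0 := by
  rintro rfl
  simp at hw

theorem conicForm_eq_mul (hw : w ^ 2 + 1 = 2 * m * w) (x y : B) :
    x ^ 2 + y ^ 2 - 2 * algebraMap K B m * x * y = (x - w • y) * (x - w⁻¹ • y) := by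
  have hw0 := ne_zero_of_sq_add_one_eq_two_mul hw
  have sum_roots : 2 * algebraMap K B m = algebraMap K B w + algebraMap K B w⁻¹ := by
    rw [← map_ofNat (algebraMap K B), ← map_mul, ← map_add]
    congr 1
    field_simp
    linear_combination -hw
  have prod_roots : algebraMap K B w * algebraMap K B w⁻¹ = 1 := by
    rw [← map_mul, mul_inv_cancel₀ hw0, map_one]
  simp only [Algebra.smul_def]
  linear_combination -x * y * sum_roots - y ^ 2 * prod_roots

/-- The coordinate `x` in the parametrization of the conic `x² + y² - 2mxy = 1` by `𝔾ₘ` given by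
`x - w y = T` and `x - w⁻¹ y = T⁻¹`, where `w + w⁻¹ = 2m`. -/
noncomputable def conicX (w : K) : K[T;T⁻¹] := (w ^ 2 - 1)⁻¹ • (w ^ 2 • T (-1) - T 1)

/-- The coordinate `y` in the same parametrization as `conicX`. -/
noncomputable def conicY (w : K) : K[T;T⁻¹] := (w ^ 2 - 1)⁻¹ • w • (T (-1) - T 1)

theorem conicX_sub_smul_conicY (hw1 : w ^ 2 ≠ 1) : conicX w - w • conicY w = T 1 := by
  have := sub_ne_zero.mpr hw1
  simp only [conicX, conicY]
  match_scalars
  · field_simp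
    ring
  · field_simp
    ring

theorem conicX_sub_inv_smul_conicY (hw0 : w ≠ 0) (hw1 : w ^ 2 ≠ 1) :
    conicX w - w⁻¹ • conicY w = T (-1) := by
  have := sub_ne_zero.mpr hw1
  simp only [conicX, conicY]
  match_scalars
  · field_simp
  · field_simp
    ring

theorem conicForm_conicX_conicY (hw : w ^ 2 + 1 = 2 * m * w) (hw1 : w ^ 2 ≠ 1) :
    conicX w ^ 2 + conicY w ^ 2 - 2 * algebraMap K K[T;T⁻¹] m * conicX w * conicY w = 1 := by
  rw [conicForm_eq_mul hw, conicX_sub_smul_conicY hw1,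
    conicX_sub_inv_smul_conicY (ne_zero_of_sq_add_one_eq_two_mul hw) hw1,
    ← LaurentPolynomial.T_add, add_neg_cancel, LaurentPolynomial.T_zero]

theorem exists_algHom_conicX_conicY (hw : w ^ 2 + 1 = 2 * m * w) (hw1 : w ^ 2 ≠ 1) {x y : B}
    (h : x ^ 2 + y ^ 2 - 2 * algebraMap K B m * x * y = 1) :
    ∃ j : K[T;T⁻¹] →ₐ[K] B, j (conicX w) = x ∧ j (conicY w) = y := by
  let u : Bˣ := Units.mkOfMulEqOne _ _ ((conicForm_eq_mul hw x y).symm.trans h)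
  let j : K[T;T⁻¹] →ₐ[K] B := AlgHom.mk (LaurentPolynomial.eval₂ (algebraMap K B) u)
    fun r ↦ LaurentPolynomial.eval₂_C ..
  have map_T : j (T 1) = x - w • y :=
    (LaurentPolynomial.eval₂_T (algebraMap K B) u 1).trans (by rw [zpow_one]; rfl)
  have map_T_inv : j (T (-1)) = x - w⁻¹ • y :=
    (LaurentPolynomial.eval₂_T (algebraMap K B) u (-1)).trans (by rw [zpow_neg_one]; rfl)
  have hw0 := ne_zero_of_sq_add_one_eq_two_mul hw
  have := sub_ne_zero.mpr hw1
  refine ⟨j, ?_, ?_⟩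
  · simp only [conicX, map_smul, map_sub, map_T, map_T_inv]
    match_scalars
    · field_simp
    · field_simp
      ring
  · simp only [conicY, map_smul, map_sub, map_T, map_T_inv]
    match_scalars <;> field_simp <;> ring

end Conic

section Radicands

open Polynomial (toLaurent expand)

variable {K : Type*} [Field K] {c w : K}

/-- The function `4t₁² = 2x² + 2y² - 1` on the conic, whose square root defines the cover `X₁`. -/
noncomputable def radicand₁ (w : K) : K[T;T⁻¹] := 2 * conicX w ^ 2 + 2 * conicY w ^ 2 - 1

/-- The function `4t₂² = 2x² + 2 - y²` on the conic, whose square root defines the cover `X₂`. -/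
noncomputable def radicand₂ (w : K) : K[T;T⁻¹] := 2 * conicX w ^ 2 + 2 - conicY w ^ 2

/-- The polynomial in `T²` cutting out the branch points of `X₁`, with `c = w²`: it is
`(c - 1)² T² (2x² + 2y² - 1)`. -/
noncomputable def branchPoly₁ (c : K) : K[X] :=
  (Polynomial.C (c + 1) * Polynomial.X - Polynomial.C (2 * c)) *
    (Polynomial.C 2 * Polynomial.X - Polynomial.C (c + 1))

/-- The polynomial in `T²` cutting out the branch points of `X₂`, with `c = w²`: it is
`(c - 1)² T² (2x² + 2 - y²)`. -/
noncomputable def branchPoly₂ (c : K) : K[X] :=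
  (Polynomial.C (2 - c) * Polynomial.X - Polynomial.C c) *
    (Polynomial.X - Polynomial.C (2 * c - 1))

theorem toLaurent_mul_conicX (hw1 : w ^ 2 ≠ 1) :
    toLaurent (Polynomial.C (w ^ 2 - 1) * Polynomial.X) * conicX w =
      toLaurent (Polynomial.C (w ^ 2) - Polynomial.X ^ 2) := by
  rw [map_mul, Polynomial.toLaurent_C, Polynomial.toLaurent_X, ← LaurentPolynomial.smul_eq_C_mul,
    conicX, smul_mul_smul_comm, mul_inv_cancel₀ (sub_ne_zero.mpr hw1), one_smul, mul_sub,
    mul_smul_comm, ← LaurentPolynomial.T_add, ← LaurentPolynomial.T_add]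
  simp [LaurentPolynomial.smul_eq_C_mul]

theorem toLaurent_mul_conicY (hw1 : w ^ 2 ≠ 1) :
    toLaurent (Polynomial.C (w ^ 2 - 1) * Polynomial.X) * conicY w =
      toLaurent (Polynomial.C w * (1 - Polynomial.X ^ 2)) := by
  rw [map_mul, Polynomial.toLaurent_C, Polynomial.toLaurent_X, ← LaurentPolynomial.smul_eq_C_mul,
    conicY, smul_mul_smul_comm, mul_inv_cancel₀ (sub_ne_zero.mpr hw1), one_smul, mul_smul_comm,
    mul_sub, ← LaurentPolynomial.T_add, ← LaurentPolynomial.T_add]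
  simp [LaurentPolynomial.smul_eq_C_mul]

theorem sq_mul_radicand₁ (hw1 : w ^ 2 ≠ 1) :
    toLaurent (Polynomial.C (w ^ 2 - 1) * Polynomial.X) ^ 2 * radicand₁ w =
      toLaurent (expand K 2 (branchPoly₁ (w ^ 2))) := by
  rw [radicand₁, mul_sub, mul_add, mul_left_comm, mul_left_comm _ 2, ← mul_pow, ← mul_pow,
    toLaurent_mul_conicX hw1, toLaurent_mul_conicY hw1]
  simp only [branchPoly₁, map_sub, map_add, map_mul, map_pow, map_ofNat, map_one,
    Polynomial.expand_C, Polynomial.expand_X]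
  ring

theorem sq_mul_radicand₂ (hw1 : w ^ 2 ≠ 1) :
    toLaurent (Polynomial.C (w ^ 2 - 1) * Polynomial.X) ^ 2 * radicand₂ w =
      toLaurent (expand K 2 (branchPoly₂ (w ^ 2))) := by
  rw [radicand₂, mul_sub, mul_add, mul_left_comm, ← mul_pow, ← mul_pow,
    toLaurent_mul_conicX hw1, toLaurent_mul_conicY hw1]
  simp only [branchPoly₂, map_sub, map_mul, map_pow, map_ofNat, map_one,
    Polynomial.expand_C, Polynomial.expand_X]
  ring

theorem eval_branchPoly₁ (c r : K) :
    (branchPoly₁ c).eval r = ((c + 1) * r - 2 * c) * (2 * r - (c + 1)) := by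
  simp [branchPoly₁]

theorem eval_branchPoly₂ (c r : K) :
    (branchPoly₂ c).eval r = ((2 - c) * r - c) * (r - (2 * c - 1)) := by
  simp [branchPoly₂]

theorem eval_derivative_branchPoly₁ (c r : K) : (branchPoly₁ c).derivative.eval r =
    (c + 1) * (2 * r - (c + 1)) + ((c + 1) * r - 2 * c) * 2 := by
  simp [branchPoly₁]

theorem eval_derivative_branchPoly₂ (c r : K) : (branchPoly₂ c).derivative.eval r =
    (2 - c) * (r - (2 * c - 1)) + ((2 - c) * r - c) := by
  simp [branchPoly₂]

theorem eval_branchPoly₁_add_one_div_two (h2 : (2 : K) ≠ 0) (c : K) :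
    (branchPoly₁ c).eval ((c + 1) / 2) = 0 := by
  rw [eval_branchPoly₁, mul_div_cancel₀ _ h2, sub_self, mul_zero]

theorem eval_derivative_branchPoly₁_add_one_div_two (h2 : (2 : K) ≠ 0) (c : K) :
    (branchPoly₁ c).derivative.eval ((c + 1) / 2) = (c - 1) ^ 2 := by
  rw [eval_derivative_branchPoly₁]
  field_simp
  ring

variable [IsAlgClosed K]

theorem not_isSquare_expand_branchPoly₁ (h2 : (2 : K) ≠ 0) (hc1 : c ≠ 1) (hc : c ≠ -1) :
    ¬ IsSquare (toLaurent (expand K 2 (branchPoly₁ c))) := by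
  apply not_isSquare_toLaurent_expand_two h2 (div_ne_zero (mt eq_neg_of_add_eq_zero_left hc) h2)
    (eval_branchPoly₁_add_one_div_two h2 c)
  rw [eval_derivative_branchPoly₁_add_one_div_two h2]
  exact pow_ne_zero 2 (sub_ne_zero.mpr hc1)

theorem not_isSquare_expand_branchPoly₂ (h2 : (2 : K) ≠ 0) (hc0 : c ≠ 0) (hc1 : c ≠ 1)
    (hc : c ≠ -1) : ¬ IsSquare (toLaurent (expand K 2 (branchPoly₂ c))) := by
  have derivative_ne_zero : 2 * (c - 1) ^ 2 ≠ 0 :=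
    mul_ne_zero h2 (pow_ne_zero 2 (sub_ne_zero.mpr hc1))
  -- The root `2c - 1` may sit at the puncture `0` of the torus; then `c / (2 - c)` does not.
  by_cases h : 2 * c - 1 = 0
  · have h2c : 2 - c ≠ 0 := fun h' ↦ hc (by linear_combination h + h')
    apply not_isSquare_toLaurent_expand_two h2 (div_ne_zero hc0 h2c)
    · rw [eval_branchPoly₂, mul_div_cancel₀ _ h2c, sub_self, zero_mul]
    · convert! derivative_ne_zero using 1
      rw [eval_derivative_branchPoly₂]
      field_simp
      ring
  · apply not_isSquare_toLaurent_expand_two h2 h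
    · rw [eval_branchPoly₂, sub_self, mul_zero]
    · convert! neg_ne_zero.mpr derivative_ne_zero using 1
      rw [eval_derivative_branchPoly₂]
      ring

theorem not_isSquare_expand_branchPoly₁_mul_branchPoly₂ (h2 : (2 : K) ≠ 0) (h3 : (3 : K) ≠ 0)
    (hc1 : c ≠ 1) (hc : c ≠ -1) :
    ¬ IsSquare (toLaurent (expand K 2 (branchPoly₁ c * branchPoly₂ c))) := by
  -- The root `(c + 1) / 2` of the first factor is shared with the second exactly when `c = -2`;
  -- the other root `2c / (c + 1)` of the first factor is then `4`.
  by_cases hc2 : c + 2 = 0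
  · obtain rfl := eq_neg_of_add_eq_zero_left hc2
    have root : (branchPoly₁ (-2 : K)).eval (2 ^ 2) = 0 := by
      rw [eval_branchPoly₁]
      ring
    apply not_isSquare_toLaurent_expand_two h2 (pow_ne_zero 2 h2)
    · rw [Polynomial.eval_mul, root, zero_mul]
    · rw [eval_derivative_mul_of_eval_eq_zero root, eval_derivative_branchPoly₁,
        eval_branchPoly₂]
      convert! neg_ne_zero.mpr (mul_ne_zero h2 (pow_ne_zero 6 h3)) using 1
      ring
  · have root := eval_branchPoly₁_add_one_div_two h2 c
    apply not_isSquare_toLaurent_expand_two h2 (div_ne_zero (mt eq_neg_of_add_eq_zero_left hc) h2)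
    · rw [Polynomial.eval_mul, root, zero_mul]
    · have second_factor : (branchPoly₂ c).eval ((c + 1) / 2) =
          3 * (c + 2) * (c - 1) ^ 2 / 2 ^ 2 := by
        rw [eval_branchPoly₂]
        field_simp
        ring
      have hc1' : (c - 1) ^ 2 ≠ 0 := pow_ne_zero 2 (sub_ne_zero.mpr hc1)
      rw [eval_derivative_mul_of_eval_eq_zero root, eval_derivative_branchPoly₁_add_one_div_two h2,
        second_factor]
      exact mul_ne_zero hc1' (div_ne_zero (mul_ne_zero (mul_ne_zero h3 hc2) hc1')
        (pow_ne_zero 2 h2))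

theorem not_isSquare_radicand₁ (h2 : (2 : K) ≠ 0) (hw1 : w ^ 2 ≠ 1) (hw' : w ^ 2 ≠ -1) :
    ¬ IsSquare (radicand₁ w) := fun h ↦
  not_isSquare_expand_branchPoly₁ h2 hw1 hw' <| by
    rw [← sq_mul_radicand₁ hw1]
    exact (IsSquare.sq _).mul h

theorem not_isSquare_radicand₂ (h2 : (2 : K) ≠ 0) (hw0 : w ≠ 0) (hw1 : w ^ 2 ≠ 1)
    (hw' : w ^ 2 ≠ -1) : ¬ IsSquare (radicand₂ w) := fun h ↦
  not_isSquare_expand_branchPoly₂ h2 (pow_ne_zero 2 hw0) hw1 hw' <| by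
    rw [← sq_mul_radicand₂ hw1]
    exact (IsSquare.sq _).mul h

theorem not_isSquare_radicand₁_mul_radicand₂ (h2 : (2 : K) ≠ 0) (h3 : (3 : K) ≠ 0)
    (hw1 : w ^ 2 ≠ 1) (hw' : w ^ 2 ≠ -1) : ¬ IsSquare (radicand₁ w * radicand₂ w) := fun h ↦
  not_isSquare_expand_branchPoly₁_mul_branchPoly₂ h2 h3 hw1 hw' <| by
    rw [map_mul, map_mul, ← sq_mul_radicand₁ hw1, ← sq_mul_radicand₂ hw1, mul_mul_mul_comm]
    exact ((IsSquare.sq _).mul (IsSquare.sq _)).mul h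

end Radicands

section Curve

variable {K : Type*} [Field K] {m w : K}

/-- The three equations of the curve `X₁₂` in the coordinates `x, y, t₁, t₂` (numbered `0` to `3`),
over any field and with `m` in place of `λ`. -/
def curveX12Equations (m : K) : Set (MvPolynomial (Fin 4) K) :=
  {1 - X 0 ^ 2 - X 1 ^ 2 + 2 * C m * X 0 * X 1,
    4 * X 2 ^ 2 - 2 * X 0 ^ 2 - 2 * X 1 ^ 2 + 1,
    4 * X 3 ^ 2 - 2 * X 0 ^ 2 - 2 + X 1 ^ 2}

theorem map_image_curveX12Equations {L : Type*} [Field L] (f : K →+* L) (m : K) :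
    MvPolynomial.map f '' curveX12Equations m = curveX12Equations (f m) := by
  simp [curveX12Equations, Set.image_insert_eq]

/-- The substitution that parametrizes the conic by `conicX`, `conicY` and takes `2t₁`, `2t₂` as
the square roots of the radicands. -/
noncomputable def curveHom (w : K) : MvPolynomial (Fin 4) K →ₐ[K] MvPolynomial (Fin 2) K[T;T⁻¹] :=
  aeval ![C (conicX w), C (conicY w), (2⁻¹ : K) • X 0, (2⁻¹ : K) • X 1]

theorem inv_two_smul_two_mul {B : Type*} [CommRing B] [Algebra K B] (h2 : (2 : K) ≠ 0) (b : B) :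
    (2⁻¹ : K) • (2 * b) = b := by
  rw [inv_smul_eq_iff₀ h2, two_smul, two_mul]

theorem span_curveX12Equations_le_comap (h2 : (2 : K) ≠ 0) (hw : w ^ 2 + 1 = 2 * m * w)
    (hw1 : w ^ 2 ≠ 1) : Ideal.span (curveX12Equations m) ≤
      (biquadraticIdeal (radicand₁ w) (radicand₂ w)).comap (curveHom w) := by
  have four_mul_sq (t : MvPolynomial (Fin 2) K[T;T⁻¹]) : 4 * ((2⁻¹ : K) • t) ^ 2 = t ^ 2 := by
    conv_rhs => rw [← inv_two_smul_two_mul h2 t, ← mul_smul_comm]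
    ring
  have conic_eq := congrArg (C (σ := Fin 2)) (conicForm_conicX_conicY hw hw1)
  simp only [map_sub, map_add, map_mul, map_pow, map_ofNat, map_one,
    ← LaurentPolynomial.C_eq_algebraMap] at conic_eq
  have image_conic :
      curveHom w (1 - X 0 ^ 2 - X 1 ^ 2 + 2 * C m * X 0 * X 1) = 0 := by
    simp only [curveHom, map_add, map_sub, map_mul, map_pow, map_ofNat, map_one, aeval_X,
      Matrix.cons_val, algHom_C, MvPolynomial.algebraMap_apply, ← LaurentPolynomial.C_eq_algebraMap]
    linear_combination -conic_eq
  have image_cover₁ : curveHom w (4 * X 2 ^ 2 - 2 * X 0 ^ 2 - 2 * X 1 ^ 2 + 1) =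
      X 0 ^ 2 - C (radicand₁ w) := by
    simp only [curveHom, radicand₁, map_add, map_sub, map_mul, map_pow, map_ofNat, map_one,
      aeval_X, Matrix.cons_val, four_mul_sq]
    ring
  have image_cover₂ : curveHom w (4 * X 3 ^ 2 - 2 * X 0 ^ 2 - 2 + X 1 ^ 2) =
      X 1 ^ 2 - C (radicand₂ w) := by
    simp only [curveHom, radicand₂, map_add, map_sub, map_mul, map_pow, map_ofNat, aeval_X,
      Matrix.cons_val, four_mul_sq]
    ring
  rw [Ideal.span_le, curveX12Equations, Set.insert_subset_iff, Set.insert_subset_iff,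
    Set.singleton_subset_iff]
  refine ⟨?_, ?_, ?_⟩
  · exact Ideal.mem_comap.mpr (image_conic ▸ zero_mem _)
  · exact Ideal.mem_comap.mpr (image_cover₁ ▸ X_zero_sq_sub_C_mem_biquadraticIdeal _ _)
  · exact Ideal.mem_comap.mpr (image_cover₂ ▸ X_one_sq_sub_C_mem_biquadraticIdeal _ _)

theorem comap_le_span_curveX12Equations (h2 : (2 : K) ≠ 0) (hw : w ^ 2 + 1 = 2 * m * w)
    (hw1 : w ^ 2 ≠ 1) : (biquadraticIdeal (radicand₁ w) (radicand₂ w)).comap (curveHom w) ≤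
      Ideal.span (curveX12Equations m) := by
  let q := Ideal.Quotient.mkₐ K (Ideal.span (curveX12Equations m))
  have vanish {p} (hp : p ∈ curveX12Equations m) : q p = 0 :=
    Ideal.Quotient.eq_zero_iff_mem.mpr (Ideal.subset_span hp)
  have conic_eq := vanish (Set.mem_insert _ _)
  have cover₁_eq := vanish (Set.mem_insert_of_mem _ (Set.mem_insert _ _))
  have cover₂_eq := vanish (Set.mem_insert_of_mem _ (Set.mem_insert_of_mem _ rfl))
  simp only [map_add, map_sub, map_mul, map_pow, map_one, map_ofNat, ← algebraMap_eq,
    AlgHom.commutes] at conic_eq cover₁_eq cover₂_eq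
  obtain ⟨j, hjx, hjy⟩ := exists_algHom_conicX_conicY hw hw1
    (x := q (X 0)) (y := q (X 1)) (by linear_combination -conic_eq)
  let ρ := aevalTower j ![2 * q (X 2), 2 * q (X 3)]
  have le_ker : biquadraticIdeal (radicand₁ w) (radicand₂ w) ≤ RingHom.ker ρ := by
    refine biquadraticIdeal_le_iff.mpr ⟨?_, ?_⟩
    · simp only [ρ, radicand₁, RingHom.mem_ker, map_add, map_sub, map_mul, map_pow, map_ofNat,
        map_one, aevalTower_X, aevalTower_C, Matrix.cons_val, hjx, hjy]
      linear_combination cover₁_eq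
    · simp only [ρ, radicand₂, RingHom.mem_ker, map_add, map_sub, map_mul, map_pow, map_ofNat,
        aevalTower_X, aevalTower_C, Matrix.cons_val, hjx, hjy]
      linear_combination cover₂_eq
  have comp_eq : ρ.comp (curveHom w) = q := by
    ext i
    fin_cases i <;> simp [ρ, curveHom, hjx, hjy, inv_two_smul_two_mul h2]
  intro p hp
  rw [← Ideal.Quotient.eq_zero_iff_mem]
  exact (DFunLike.congr_fun comp_eq p).symm.trans (le_ker hp)

theorem isPrime_span_curveX12Equations [IsAlgClosed K] (h2 : (2 : K) ≠ 0) (h3 : (3 : K) ≠ 0)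
    (hm0 : m ≠ 0) (hm1 : m ^ 2 ≠ 1) : (Ideal.span (curveX12Equations m)).IsPrime := by
  obtain ⟨w, hw, hw1, hw'⟩ := exists_sq_add_one_eq_two_mul h2 hm0 hm1
  have hw0 := ne_zero_of_sq_add_one_eq_two_mul hw
  have h2T : (2 : K[T;T⁻¹]) ≠ 0 := by
    simpa only [map_ofNat, map_zero] using (algebraMap K K[T;T⁻¹]).injective.ne h2
  have prime := isPrime_biquadraticIdeal h2T (not_isSquare_radicand₁ h2 hw1 hw')
    (not_isSquare_radicand₂ h2 hw0 hw1 hw')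
    (not_isSquare_radicand₁_mul_radicand₂ h2 h3 hw1 hw')
  rw [(span_curveX12Equations_le_comap h2 hw hw1).antisymm
    (comap_le_span_curveX12Equations h2 hw hw1)]
  exact prime.comap _

end Curve

section Descent

attribute [local instance] MvPolynomial.algebraMvPolynomial

theorem isIrreducible_zeroLocus_of_map_image {R S σ : Type*} [CommRing R] [CommRing S]
    [Algebra R S] [FaithfulSMul R S] [Algebra.IsIntegral R S] {s : Set (MvPolynomial σ R)}
    (h : IsIrreducible (PrimeSpectrum.zeroLocus (MvPolynomial.map (algebraMap R S) '' s))) :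
    IsIrreducible (PrimeSpectrum.zeroLocus s) := by
  let f : MvPolynomial σ R →+* MvPolynomial σ S := MvPolynomial.map (algebraMap R S)
  have integral : f.IsIntegral :=
    Algebra.IsIntegral.isIntegral (R := MvPolynomial σ R) (A := MvPolynomial σ S)
  have surjective : Function.Surjective (PrimeSpectrum.comap f) :=
    integral.comap_surjective (map_injective _ (FaithfulSMul.algebraMap_injective R S))
  rw [← Set.image_preimage_eq (PrimeSpectrum.zeroLocus s) surjective,
    PrimeSpectrum.preimage_comap_zeroLocus]
  exact h.image _ (PrimeSpectrum.continuous_comap f).continuousOn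

end Descent

theorem curve_X12_irreducible_general {K : Type*} [Field K] (h2 : (2 : K) ≠ 0) (h3 : (3 : K) ≠ 0)
    {m : K} (hm0 : m ≠ 0) (hm1 : m ^ 2 ≠ 1) :
    IsIrreducible (PrimeSpectrum.zeroLocus (curveX12Equations m)) := by
  let L := AlgebraicClosure K
  have injective := (algebraMap K L).injective
  have prime : (Ideal.span (curveX12Equations (algebraMap K L m))).IsPrime :=
    isPrime_span_curveX12Equations (by simpa only [map_ofNat, map_zero] using injective.ne h2)
      (by simpa only [map_ofNat, map_zero] using injective.ne h3)
      (by simpa only [map_zero] using injective.ne hm0)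
      (by simpa only [map_pow, map_one] using injective.ne hm1)
  apply isIrreducible_zeroLocus_of_map_image (S := L)
  rw [map_image_curveX12Equations, ← PrimeSpectrum.zeroLocus_span]
  exact (PrimeSpectrum.isIrreducible_zeroLocus_iff_of_radical _ prime.isRadical).mpr prime

/-- For rational `λ ≠ 0` with `λ² < 1`, the affine curve `X₁₂ ⊂ ℂ⁴` defined by
`1 − x² − y² + 2λxy = 0`, `4t₁² − 2x² − 2y² + 1 = 0` and `4t₂² − 2x² − 2 + y² = 0`
is irreducible: the zero locus of the ideal generated by these three polynomials
in `Spec ℂ[x, y, t₁, t₂]` is an irreducible closed set. -/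
theorem curve_X12_irreducible (l : ℚ) (hl0 : l ≠ 0) (hl1 : l ^ 2 < 1) :
    IsIrreducible (PrimeSpectrum.zeroLocus
      ({1 - X 0 ^ 2 - X 1 ^ 2 + 2 * C (l : ℂ) * X 0 * X 1,
        4 * X 2 ^ 2 - 2 * X 0 ^ 2 - 2 * X 1 ^ 2 + 1,
        4 * X 3 ^ 2 - 2 * X 0 ^ 2 - 2 + X 1 ^ 2} :
        Set (MvPolynomial (Fin 4) ℂ))) :=
  curve_X12_irreducible_general two_ne_zero three_ne_zero (mod_cast hl0) (mod_cast hl1.ne)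
end
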